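/- arXiv:2411.11492 — 3 statements merged into one kernel-verified Lean document; each statement's English description precedes it below -/
import Mathlib

section
/- Let d, n be natural numbers with n ≥ 1, let v_0, v_1, …, v_n and w be points of ℝ^d all of whose coordinates are rational, and set F := convexHull ℝ {v_1, …, v_n}. Assume v_0 ∈ F and that w lies in the intrinsic (relative) interior of F. Then there exist rational numbers μ_0 > 0 and μ_1, …, μ_n ≥ 0 with μ_0 + μ_1 + ⋯ + μ_n = 1 and w = μ_0 v_0 + μ_1 v_1 + ⋯ + μ_n v_n. (This is the convex-geometric step in the proof of Lemma 5.1: a rational point w in the interior of the face F can be written as a rational convex combination of the vertices v_1, …, v_n of F together with a prescribed rational point v_0 ∈ F, with strictly positive weight on v_0.) -/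
/-!
Carathéodory's theorem writes a rational point of a real convex hull as a convex combination of
affinely independent rational points. A `ℚ`-linear retraction `ℝ → ℚ` sends its weights to rational
weights representing the same point, so by affine independence the weights were rational all along.

To put positive weight on `v₀`, prolong the segment from `v₀` to `w` slightly beyond `w`, to a
rational point `u` still lying in `F`, and expand `u` in the generators of `F`.
-/

open Filter Topology

section Coordinates

variable {K R ι κ : Type*} [Fintype ι]

theorem sum_smul_eq_of_leftInverse_algebraMap [CommSemiring K] [Semiring R] [Algebra K R]
    {r : R →ₗ[K] K} (hr : Function.LeftInverse r (algebraMap K R))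
    {c : ι → R} {z : ι → κ → K} {x : κ → K}
    (h : ∑ i, c i • (algebraMap K R ∘ z i) = algebraMap K R ∘ x) :
    ∑ i, r (c i) • z i = x := by
  have map_mul_algebraMap (b : R) (a : K) : r (b * algebraMap K R a) = r b * a := by
    rw [← Algebra.commutes, ← Algebra.smul_def, map_smul, smul_eq_mul, mul_comm]
  funext j
  have hj : ∑ i, c i * algebraMap K R (z i j) = algebraMap K R (x j) := by
    simpa using congrFun h j
  simpa [map_mul_algebraMap, hr _] using congrArg r hj

theorem exists_algebraMap_weights_of_affineIndependent [Field K] [Ring R] [Nontrivial R]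
    [Algebra K R] {z : ι → κ → K} (hz : AffineIndependent R fun i ↦ algebraMap K R ∘ z i)
    {c : ι → R} (hc : ∑ i, c i = 1) {x : κ → K}
    (h : ∑ i, c i • (algebraMap K R ∘ z i) = algebraMap K R ∘ x) :
    ∃ q : ι → K, (∀ i, algebraMap K R (q i) = c i) ∧ ∑ i, q i = 1 ∧ ∑ i, q i • z i = x := by
  obtain ⟨r, hr⟩ := (Algebra.linearMap K R).exists_leftInverse_of_injective
    (LinearMap.ker_eq_bot.2 (algebraMap K R).injective)
  replace hr : Function.LeftInverse r (algebraMap K R) := LinearMap.congr_fun hr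
  have sum_weights : ∑ i, r (c i) = 1 := by
    rw [← map_sum, hc, ← map_one (algebraMap K R), hr]
  have sum_smul : ∑ i, r (c i) • z i = x := sum_smul_eq_of_leftInverse_algebraMap hr h
  have sum_algebraMap_weights : ∑ i, algebraMap K R (r (c i)) = 1 := by
    rw [← map_sum, sum_weights, map_one]
  have sum_algebraMap_smul : ∑ i, algebraMap K R (r (c i)) • (algebraMap K R ∘ z i) =
      algebraMap K R ∘ x := by
    rw [← sum_smul]
    ext j
    simp [Algebra.smul_def]
  have weights_eq : (fun i ↦ algebraMap K R (r (c i))) = c := by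
    refine (affineIndependent_iff_eq_of_fintype_affineCombination_eq R _).1 hz _ _
      sum_algebraMap_weights hc ?_
    rw [Finset.affineCombination_eq_linear_combination _ _ _ sum_algebraMap_weights,
      Finset.affineCombination_eq_linear_combination _ _ _ hc, sum_algebraMap_smul, h]
  exact ⟨fun i ↦ r (c i), congrFun weights_eq, sum_weights, sum_smul⟩

end Coordinates

theorem mem_convexHull_of_algebraMap_comp_mem {K R κ : Type*}
    [Field K] [LinearOrder K] [IsStrictOrderedRing K]
    [Field R] [LinearOrder R] [IsStrictOrderedRing R] [Algebra K R] [IsOrderedModule K R]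
    {s : Set (κ → K)} {x : κ → K}
    (hx : algebraMap K R ∘ x ∈ convexHull R ((algebraMap K R ∘ ·) '' s)) :
    x ∈ convexHull K s := by
  obtain ⟨τ, _, y, c, hys, hy, hc_pos, hc_sum, hcy⟩ := eq_pos_convex_span_of_mem_convexHull hx
  choose z hzs hzy using fun t ↦ hys (Set.mem_range_self t)
  obtain rfl : (fun t ↦ algebraMap K R ∘ z t) = y := funext hzy
  obtain ⟨q, hqc, hq_sum, hqz⟩ := exists_algebraMap_weights_of_affineIndependent hy hc_sum hcy
  have hq_nonneg (t : τ) : 0 ≤ q t := by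
    refine ((algebraMap_mono R).reflect_lt ?_).le
    rw [map_zero, hqc]
    exact hc_pos t
  exact mem_convexHull_of_exists_fintype q z hq_nonneg hq_sum hzs hqz

theorem convexHull_range_eq_image_stdSimplex {R E ι : Type*} [Fintype ι]
    [Field R] [LinearOrder R] [IsStrictOrderedRing R] [AddCommGroup E] [Module R E] (v : ι → E) :
    convexHull R (Set.range v) = Fintype.linearCombination R v '' stdSimplex R ι := by
  classical
  rw [← convexHull_rangle_single_eq_stdSimplex, LinearMap.image_convexHull, ← Set.range_comp]
  congr 2
  ext i
  simp

theorem eventually_lineMap_mem_of_mem_intrinsicInterior {R V P : Type*} [Ring R]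
    [TopologicalSpace R] [AddCommGroup V] [Module R V] [TopologicalSpace V] [ContinuousSMul R V]
    [TopologicalSpace P] [AddTorsor V P] [IsTopologicalAddTorsor P] {s : Set P} {x y : P}
    (hx : x ∈ intrinsicInterior R s) (hy : y ∈ affineSpan R s) :
    ∀ᶠ t : R in 𝓝 1, AffineMap.lineMap y x t ∈ s := by
  obtain ⟨p, hp, rfl⟩ := mem_intrinsicInterior.1 hx
  let line (t : R) : affineSpan R s :=
    ⟨AffineMap.lineMap y p t, AffineMap.lineMap_mem t hy p.2⟩
  have line_continuous : Continuous line := AffineMap.lineMap_continuous.subtype_mk _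
  have line_one : line 1 = p := Subtype.ext (AffineMap.lineMap_apply_one y _)
  exact line_continuous.continuousAt.eventually_mem
    (by rwa [line_one, ← mem_interior_iff_mem_nhds])

theorem exists_pos_weight_of_lineMap_mem_convexHull {K E ι : Type*} [Fintype ι]
    [Field K] [LinearOrder K] [IsStrictOrderedRing K] [AddCommGroup E] [Module K E]
    {v : ι → E} {v₀ w : E} {t : K} (ht : 1 < t)
    (hu : AffineMap.lineMap v₀ w t ∈ convexHull K (Set.range v)) :
    ∃ (μ₀ : K) (μ : ι → K), 0 < μ₀ ∧ (∀ i, 0 ≤ μ i) ∧ μ₀ + ∑ i, μ i = 1 ∧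
      w = μ₀ • v₀ + ∑ i, μ i • v i := by
  rw [convexHull_range_eq_image_stdSimplex] at hu
  obtain ⟨c, ⟨hc_nonneg, hc_sum⟩, hcv⟩ := hu
  have ht₀ : 0 < t := zero_lt_one.trans ht
  refine ⟨1 - t⁻¹, fun i ↦ t⁻¹ * c i, sub_pos.2 (inv_lt_one_of_one_lt₀ ht),
    fun i ↦ mul_nonneg (inv_nonneg.2 ht₀.le) (hc_nonneg i), ?_, ?_⟩
  · rw [← Finset.mul_sum, hc_sum, mul_one, sub_add_cancel]
  · calc
      w = AffineMap.lineMap v₀ (AffineMap.lineMap v₀ w t) t⁻¹ := by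
        rw [AffineMap.lineMap_lineMap_right, inv_mul_cancel₀ ht₀.ne', AffineMap.lineMap_apply_one]
      _ = (1 - t⁻¹) • v₀ + t⁻¹ • ∑ i, c i • v i := by
        rw [AffineMap.lineMap_apply_module, ← hcv, Fintype.linearCombination_apply]
      _ = (1 - t⁻¹) • v₀ + ∑ i, (t⁻¹ * c i) • v i := by
        simp only [Finset.smul_sum, mul_smul]

theorem stmt_5_general {K ι κ : Type*} [Fintype ι] [Field K] [LinearOrder K]
    [IsStrictOrderedRing K] [Algebra K ℝ] [IsOrderedModule K ℝ]
    {v₀ : κ → ℝ} (hv₀ : ∀ j, ∃ q : K, v₀ j = algebraMap K ℝ q)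
    {v : ι → κ → ℝ} (hv : ∀ i j, ∃ q : K, v i j = algebraMap K ℝ q)
    {w : κ → ℝ} (hw : ∀ j, ∃ q : K, w j = algebraMap K ℝ q)
    (hv₀_mem : v₀ ∈ affineSpan ℝ (Set.range v))
    (hw_mem : w ∈ intrinsicInterior ℝ (convexHull ℝ (Set.range v))) :
    ∃ (μ₀ : K) (μ : ι → K), 0 < μ₀ ∧ (∀ i, 0 ≤ μ i) ∧ μ₀ + ∑ i, μ i = 1 ∧
      w = algebraMap K ℝ μ₀ • v₀ + ∑ i, algebraMap K ℝ (μ i) • v i := by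
  choose v₀' hv₀' using hv₀
  choose v' hv' using hv
  choose w' hw' using hw
  obtain rfl : v₀ = algebraMap K ℝ ∘ v₀' := funext hv₀'
  obtain rfl : v = fun i ↦ algebraMap K ℝ ∘ v' i := funext fun i ↦ funext (hv' i)
  obtain rfl : w = algebraMap K ℝ ∘ w' := funext hw'
  rw [← affineSpan_convexHull] at hv₀_mem
  have tendsto_one : Tendsto (fun m : ℕ ↦ 1 + 1 / ((m : ℝ) + 1)) atTop (𝓝 1) := by
    simpa using tendsto_one_div_add_atTop_nhds_zero_nat.const_add (1 : ℝ)
  obtain ⟨m, hm⟩ := (tendsto_one.eventually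
    (eventually_lineMap_mem_of_mem_intrinsicInterior hw_mem hv₀_mem)).exists
  have hu : AffineMap.lineMap v₀' w' (1 + 1 / ((m : K) + 1)) ∈ convexHull K (Set.range v') := by
    refine mem_convexHull_of_algebraMap_comp_mem (R := ℝ) ?_
    rw [← Set.range_comp]
    convert! hm
    ext j
    simp [AffineMap.lineMap_apply]
  obtain ⟨μ₀, μ, hμ₀, hμ, hμ_sum, rfl⟩ :=
    exists_pos_weight_of_lineMap_mem_convexHull (lt_add_of_pos_right 1 (by positivity)) hu
  refine ⟨μ₀, μ, hμ₀, hμ, hμ_sum, ?_⟩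
  ext j
  simp [Algebra.smul_def]

/-- Convex-geometric step in the proof of Lemma 5.1: a rational point `w` in the
relative interior of the convex hull `F` of rational points `v 1, …, v n` can be
written as a rational convex combination of `v 1, …, v n` together with a prescribed
rational point `v₀ ∈ F`, with strictly positive weight on `v₀`. -/
theorem stmt_5 (d n : ℕ) (hn : 1 ≤ n)
    (v₀ : Fin d → ℝ) (hv₀ : ∀ j, ∃ q : ℚ, v₀ j = (q : ℝ))
    (v : Fin n → (Fin d → ℝ)) (hv : ∀ i j, ∃ q : ℚ, v i j = (q : ℝ))
    (w : Fin d → ℝ) (hw : ∀ j, ∃ q : ℚ, w j = (q : ℝ))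
    (F : Set (Fin d → ℝ)) (hF : F = convexHull ℝ (Set.range v))
    (hv₀F : v₀ ∈ F) (hwF : w ∈ intrinsicInterior ℝ F) :
    ∃ (μ₀ : ℚ) (μ : Fin n → ℚ), 0 < μ₀ ∧ (∀ i, 0 ≤ μ i) ∧
      (μ₀ + ∑ i, μ i = 1) ∧
      w = (μ₀ : ℝ) • v₀ + ∑ i, (μ i : ℝ) • v i := by
  subst hF
  exact stmt_5_general hv₀ hv hw (convexHull_subset_affineSpan _ hv₀F) hwF
end

section
/- Let G be a finitely presented group, let g_1, …, g_k be a finite generating family of G, and let ψ : G → ℤ be a surjective group homomorphism such that the ℚ-vector space ℚ ⊗_ℤ Ab(ker ψ) is finite-dimensional. Then there exists ε > 0 with the following property: for every surjective group homomorphism φ : G → ℤ for which there exists a nonzero rational number r with |r·φ(g_i) − ψ(g_i)| < ε for all i = 1, …, k, the ℚ-vector space ℚ ⊗_ℤ Ab(ker φ) is finite-dimensional. (This is the group-theoretic form of Lemma 3.2: nonvanishing of the Alexander polynomial with respect to a primitive class ψ — which, for a finitely presented group, is equivalent to finite-dimensionality of ℚ ⊗ Ab(ker ψ) — is a projectively open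 condition on the primitive cohomology class.) -/
open TensorProduct

/-!
Fix `s ∈ G` with `ψ s ≠ 0`. The crossed homomorphisms of `G` vanishing at `s` are represented by the
Alexander module over `F[Ab G]`, which is finitely generated because `G` is. A minimal polynomial
of conjugation by `s` on `H₁(ker ψ; F)` shows that this module vanishes at the prime ideal
`P = ker (F[Ab G] → F[ψ(G)])`, so by Nakayama's lemma it is annihilated by some `D ∉ P`.

The image `φ(D)` of `D` in `F[φ(G)]` is nonzero as soon as `φ` separates any two elements of the
support of `D` that `ψ` separates. This is the nonvanishing of `φ` at finitely many elements at
which `ψ` does not vanish, hence a projectively open condition. If moreover `φ s ≠ 0`, the Laurent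
polynomial `φ(D) (1 - φ(s))` is nonzero and kills `H₁(ker φ; F)`, which is finitely generated over
the Laurent polynomials and therefore finite-dimensional.
-/

/-- The first homology `H₁(K; F) = F ⊗ Ab(K)` of a group `K` with coefficients in `F`. -/
abbrev FirstHomology (F K : Type*) [CommRing F] [Group K] : Type _ :=
  F ⊗[ℤ] Additive (Abelianization K)

namespace FirstHomology

variable (F : Type*) {G K N : Type*} [CommRing F] [Group G] [Group K] [AddCommGroup N] [Module F N]

/-- The homology class of an element of the group. -/
def mk (x : K) : FirstHomology F K :=
  1 ⊗ₜ .ofMul (Abelianization.of x)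

theorem mk_mul (x y : K) : mk F (x * y) = mk F x + mk F y := by
  rw [mk, map_mul, ofMul_mul, tmul_add, mk, mk]

variable (K) in
theorem span_range_mk : Submodule.span F (Set.range (mk F (K := K))) = ⊤ := by
  have hsurj : Function.Surjective fun x : K ↦ Additive.ofMul (Abelianization.of x) :=
    QuotientGroup.mk_surjective
  have hrange : Set.range (mk F (K := K)) =
      TensorProduct.mk ℤ F (Additive (Abelianization K)) 1 '' Set.univ := by
    rw [← hsurj.range_eq, ← Set.range_comp]
    rfl
  rw [hrange, ← Submodule.baseChange_span, Submodule.span_univ, Submodule.baseChange_top]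

variable {F}

theorem hom_ext {f g : FirstHomology F K →ₗ[F] N} (h : ∀ x, f (mk F x) = g (mk F x)) : f = g :=
  LinearMap.ext_on_range (span_range_mk F K) h

/-- The linear map on homology induced by a homomorphism to an additive group. -/
noncomputable def lift (δ : K →* Multiplicative N) : FirstHomology F K →ₗ[F] N :=
  LinearMap.liftBaseChange F (MonoidHom.toAdditiveLeft (Abelianization.lift δ)).toIntLinearMap

theorem lift_mk (δ : K →* Multiplicative N) (x : K) : lift δ (mk F x) = (δ x).toAdd := by
  rw [lift, mk, LinearMap.liftBaseChange_tmul, one_smul]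
  rfl

variable (F) in
/-- The action of a group by conjugation on the homology of a normal subgroup. -/
noncomputable def conj (K : Subgroup G) [K.Normal] : Representation F G (FirstHomology F K) where
  toFun x := (MonoidHom.toAdditive
    (Abelianization.map (MulAut.conjNormal x).toMonoidHom)).toIntLinearMap.baseChange F
  map_one' := hom_ext fun x ↦ by simp [mk]
  map_mul' a b := hom_ext fun x ↦ by simp [mk]

theorem conj_mk (K : Subgroup G) [K.Normal] (g : G) (x : K) :
    conj F K g (mk F x) = mk F (MulAut.conjNormal g x) :=
  rfl

end FirstHomology

/-- A crossed homomorphism from `G` to an `R`-module on which `G` acts through `c : G →* R`. -/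
def IsCrossedHom {G R M : Type*} [Group G] [Ring R] [AddCommGroup M] [Module R M]
    (c : G →* R) (d : G → M) : Prop :=
  ∀ x y, d (x * y) = d x + c x • d y

namespace IsCrossedHom

section Ring

open scoped commutatorElement

variable {G R M : Type*} [Group G] [Ring R] [AddCommGroup M] [Module R M]
  {c : G →* R} {d : G → M}

protected theorem map_one (hd : IsCrossedHom c d) : d 1 = 0 := by
  simpa using hd 1 1

protected theorem map_inv (hd : IsCrossedHom c d) (x : G) : d x⁻¹ = -(c x⁻¹ • d x) := by
  have h := hd x⁻¹ x
  rw [inv_mul_cancel, hd.map_one] at h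
  exact eq_neg_of_add_eq_zero_left h.symm

theorem mem_of_closure_eq_top (hd : IsCrossedHom c d) {s : Set G}
    (hs : Subgroup.closure s = ⊤) {N : Submodule R M} (hN : ∀ x ∈ s, d x ∈ N) (x : G) :
    d x ∈ N := by
  have hx : x ∈ Subgroup.closure s := hs ▸ Subgroup.mem_top x
  induction hx using Subgroup.closure_induction with
  | mem x hx => exact hN x hx
  | one => exact hd.map_one ▸ N.zero_mem
  | mul x y _ _ hx hy => exact hd x y ▸ N.add_mem hx (N.smul_mem _ hy)
  | inv x _ hx => exact hd.map_inv x ▸ N.neg_mem (N.smul_mem _ hx)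

theorem finite_of_span_range_eq_top [Group.FG G] (hd : IsCrossedHom c d)
    (hspan : Submodule.span R (Set.range d) = ⊤) : Module.Finite R M := by
  obtain ⟨t, ht⟩ := Group.FG.out (G := G)
  refine ⟨Submodule.fg_def.2 ⟨d '' t, t.finite_toSet.image d, ?_⟩⟩
  rw [eq_top_iff, ← hspan, Submodule.span_le]
  rintro _ ⟨x, rfl⟩
  exact hd.mem_of_closure_eq_top ht
    (fun y hy ↦ Submodule.subset_span (Set.mem_image_of_mem _ hy)) x

variable {s : G}

theorem apply_conj (hd : IsCrossedHom c d) (hs : d s = 0) {x : G} (hx : ∀ v : M, c x • v = v) :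
    d (s * x * s⁻¹) = c s • d x := by
  rw [hd, hd, hs, hd.map_inv, hs, map_mul, mul_smul, hx, smul_zero, neg_zero, smul_zero,
    zero_add, add_zero]

theorem apply_commutatorElement (hd : IsCrossedHom c d) (hs : d s = 0) {x : G}
    (hx : ∀ v : M, c ⁅x, s⁆ • v = v) : d ⁅x, s⁆ = (1 - c s) • d x := by
  have h : d (⁅x, s⁆ * (s * x)) = d (x * s) := by
    rw [commutatorElement_def]
    group
  rw [hd, hd s, hd x, hs, hx, smul_zero, zero_add, add_zero] at h
  rw [sub_smul, one_smul]
  exact eq_sub_of_add_eq h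

end Ring

/-- Subtracting a principal crossed homomorphism after clearing denominators, so that the result
vanishes at `s`. -/
theorem normalize {G R M : Type*} [Group G] [CommRing R] [AddCommGroup M] [Module R M]
    {c : G →* R} {d : G → M} (hd : IsCrossedHom c d) (s : G) :
    IsCrossedHom c fun x ↦ (1 - c s) • d x - (1 - c x) • d s := by
  intro x y
  simp only [hd x y, map_mul]
  module

end IsCrossedHom

open Polynomial in
theorem map_aeval_apply_of_semiconj {F B V N : Type*} [CommRing F] [Ring B] [Algebra F B]
    [AddCommGroup V] [Module F V] [AddCommGroup N] [Module F N] [Module B N] [IsScalarTower F B N]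
    {f : V →ₗ[F] N} {a : Module.End F V} {b : B} (h : ∀ v, f (a v) = b • f v) (q : F[X]) (v : V) :
    f (aeval a q v) = aeval b q • f v := by
  induction q using Polynomial.induction_on generalizing v with
  | C r => simp
  | add p q hp hq => simp [hp, hq, add_smul]
  | monomial n r hn =>
    rw [pow_succ, ← mul_assoc, map_mul, aeval_X, Module.End.mul_apply, hn, h,
      map_mul (aeval b) _ X, aeval_X, mul_smul]

namespace IsCrossedHom

section FirstHomology

variable {F G B N : Type*} [CommRing F] [Group G] [Ring B] [AddCommGroup N]
  [Module F N] [Module B N] {c : G →* B} {d : G → N} {K : Subgroup G}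

variable (F) in
theorem exists_linearMap_firstHomology (hd : IsCrossedHom c d)
    (hc : ∀ x ∈ K, ∀ v : N, c x • v = v) :
    ∃ f : FirstHomology F K →ₗ[F] N, ∀ x : K, f (.mk F x) = d x := by
  let δ : K →* Multiplicative N :=
    { toFun x := .ofAdd (d x)
      map_one' := congrArg Multiplicative.ofAdd hd.map_one
      map_mul' x y := congrArg Multiplicative.ofAdd (by
        rw [Subgroup.coe_mul, hd, hc x x.2]
        rfl) }
  exact ⟨FirstHomology.lift δ, FirstHomology.lift_mk δ⟩

end FirstHomology

section Annihilation

open scoped commutatorElement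

open Polynomial

variable {F G B N : Type*} [Field F] [Group G] [Ring B] [Algebra F B] [AddCommGroup N]
  [Module F N] [Module B N] [IsScalarTower F B N] {c : G →* B} {d : G → N} {K : Subgroup G}
  [K.Normal] [FiniteDimensional F (FirstHomology F K)] {s : G}

theorem exists_aeval_smul_eq_zero_of_mem (hd : IsCrossedHom c d)
    (hc : ∀ x ∈ K, ∀ v : N, c x • v = v) (hs : d s = 0) :
    ∃ q : F[X], q ≠ 0 ∧ ∀ x ∈ K, aeval (c s) q • d x = 0 := by
  obtain ⟨f, hf⟩ := hd.exists_linearMap_firstHomology F hc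
  have hconj : f ∘ₗ FirstHomology.conj F K s = (Algebra.lsmul F F N (c s)) ∘ₗ f := by
    refine FirstHomology.hom_ext fun x ↦ ?_
    simp only [LinearMap.comp_apply, FirstHomology.conj_mk, hf, MulAut.conjNormal_apply]
    exact hd.apply_conj hs (hc x x.2)
  refine ⟨minpoly F (FirstHomology.conj F K s),
    minpoly.ne_zero (Algebra.IsIntegral.isIntegral _), fun x hx ↦ ?_⟩
  rw [← hf ⟨x, hx⟩, ← map_aeval_apply_of_semiconj (DFunLike.congr_fun hconj), minpoly.aeval,
    LinearMap.zero_apply, map_zero]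

theorem exists_aeval_smul_eq_zero (hd : IsCrossedHom c d) (hK : commutator G ≤ K)
    (hc : ∀ x ∈ K, ∀ v : N, c x • v = v) (hs : d s = 0) :
    ∃ q : F[X], q ≠ 0 ∧ ∀ x, aeval (c s) q • d x = 0 := by
  obtain ⟨q, hq, h⟩ := hd.exists_aeval_smul_eq_zero_of_mem (F := F) hc hs
  refine ⟨q * (1 - X), mul_ne_zero hq (sub_ne_zero.2 (X_ne_C 1).symm), fun x ↦ ?_⟩
  have hx : ⁅x, s⁆ ∈ K :=
    hK (Subgroup.commutator_mem_commutator (Subgroup.mem_top x) (Subgroup.mem_top s))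
  rw [map_mul, map_sub, aeval_X, map_one, mul_smul,
    ← hd.apply_commutatorElement hs (hc _ hx), h _ hx]

end Annihilation

end IsCrossedHom

theorem exists_mem_annihilator_notMem {B M : Type*} [CommRing B] [AddCommGroup M] [Module B M]
    [Module.Finite B M] (P : Ideal B) [hP : P.IsPrime] {b : B} (hb : b ∉ P)
    (h : ∀ v : M, b • v ∈ P • (⊤ : Submodule B M)) : ∃ D ∈ Module.annihilator B M, D ∉ P := by
  have hquot : (⟨P, hP⟩ : PrimeSpectrum B) ∉
      Module.support B (M ⧸ P • (⊤ : Submodule B M)) := by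
    rw [Module.mem_support_iff_of_finite, SetLike.not_le_iff_exists]
    refine ⟨b, Module.mem_annihilator.2 fun v ↦ ?_, hb⟩
    obtain ⟨v, rfl⟩ := Submodule.Quotient.mk_surjective _ v
    exact (Submodule.Quotient.mk_eq_zero _).2 (h v)
  rw [Module.support_quotient] at hquot
  have hM : (⟨P, hP⟩ : PrimeSpectrum B) ∉ Module.support B M :=
    fun hM ↦ hquot ⟨hM, PrimeSpectrum.mem_zeroLocus _ _ |>.2 le_rfl⟩
  rwa [Module.mem_support_iff_of_finite, SetLike.not_le_iff_exists] at hM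

section AlexanderModule

variable {G B : Type*} [Group G] [CommRing B]

/-- The relations saying that `x ↦ single x 1` is a crossed homomorphism vanishing at `s`. -/
noncomputable def alexanderRelations (c : G →* B) (s : G) : Submodule B (G →₀ B) :=
  Submodule.span B
    ({v | ∃ x y, v = .single (x * y) 1 - (.single x 1 + c x • .single y 1)} ∪ {.single s 1})

/-- The Alexander module of `G` relative to `s`, for the action of `G` through `c : G →* B`: the
target of the universal crossed homomorphism vanishing at `s`. -/
abbrev AlexanderModule (c : G →* B) (s : G) : Type _ :=
  (G →₀ B) ⧸ alexanderRelations c s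

namespace AlexanderModule

variable (c : G →* B) (s : G)

/-- The universal crossed homomorphism vanishing at `s`. -/
noncomputable def universal (x : G) : AlexanderModule c s :=
  (alexanderRelations c s).mkQ (.single x 1)

theorem isCrossedHom_universal : IsCrossedHom c (universal c s) := by
  intro x y
  rw [← sub_eq_zero]
  simp only [universal, ← map_smul, ← map_add, ← map_sub]
  exact (Submodule.Quotient.mk_eq_zero _).2 (Submodule.subset_span (Or.inl ⟨x, y, rfl⟩))

theorem universal_self : universal c s s = 0 :=
  (Submodule.Quotient.mk_eq_zero _).2 (Submodule.subset_span (Or.inr rfl))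

theorem span_range_universal : Submodule.span B (Set.range (universal c s)) = ⊤ := by
  have hrange : Set.range (universal c s) = (alexanderRelations c s).mkQ ''
      Set.range (Finsupp.basisSingleOne : Module.Basis G B (G →₀ B)) := by
    rw [← Set.range_comp, Finsupp.coe_basisSingleOne]
    rfl
  rw [hrange, Submodule.span_image, Module.Basis.span_eq, Submodule.map_top, Submodule.range_mkQ]

instance [Group.FG G] : Module.Finite B (AlexanderModule c s) :=
  (isCrossedHom_universal c s).finite_of_span_range_eq_top (span_range_universal c s)

variable {c s}

theorem exists_linearMap {N : Type*} [AddCommGroup N] [Module B N] {d : G → N}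
    (hd : IsCrossedHom c d) (hs : d s = 0) :
    ∃ f : AlexanderModule c s →ₗ[B] N, ∀ x, f (universal c s x) = d x := by
  have hle : alexanderRelations c s ≤ (Finsupp.linearCombination B d).ker := by
    refine Submodule.span_le.2 ?_
    rintro v (⟨x, y, rfl⟩ | rfl)
    · simp [hd x y]
    · simp [hs]
  exact ⟨(alexanderRelations c s).liftQ _ hle, fun x ↦ by simp [universal]⟩

theorem map_smul_eq_zero {R N : Type*} [CommRing R] [AddCommGroup N] [Module R N] (f : B →+* R)
    {D : B} (hD : D ∈ Module.annihilator B (AlexanderModule c s)) {d : G → N}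
    (hd : IsCrossedHom ((f : B →* R).comp c) d) (hs : d s = 0) (x : G) : f D • d x = 0 := by
  let : Module B N := Module.compHom N f
  obtain ⟨l, hl⟩ := exists_linearMap (c := c) hd hs
  have : D • d x = 0 := by
    rw [← hl, ← map_smul, Module.mem_annihilator.1 hD, map_zero]
  exact this

section Field

variable {F : Type*} [Field F] [Algebra F B] {K : Subgroup G} [K.Normal]
  [FiniteDimensional F (FirstHomology F K)]

variable (F) in
theorem exists_aeval_smul_mem (hK : commutator G ≤ K) {I : Ideal B} (hc : ∀ x ∈ K, c x - 1 ∈ I) :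
    ∃ q : Polynomial F, q ≠ 0 ∧ ∀ v : AlexanderModule c s,
      Polynomial.aeval (c s) q • v ∈ I • (⊤ : Submodule B (AlexanderModule c s)) := by
  let N := I • (⊤ : Submodule B (AlexanderModule c s))
  have hd : IsCrossedHom c fun x ↦ N.mkQ (universal c s x) := fun x y ↦ by
    simp only [isCrossedHom_universal c s x y, map_add, map_smul]
  have htriv : ∀ x ∈ K, ∀ v : AlexanderModule c s ⧸ N, c x • v = v := by
    intro x hx v
    obtain ⟨v, rfl⟩ := Submodule.Quotient.mk_surjective _ v
    rw [← Submodule.Quotient.mk_smul, Submodule.Quotient.eq]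
    nth_rw 2 [← one_smul B v]
    rw [← sub_smul]
    exact Submodule.smul_mem_smul (hc x hx) trivial
  obtain ⟨q, hq, hzero⟩ := hd.exists_aeval_smul_eq_zero (F := F) hK htriv
    (by rw [universal_self, map_zero])
  refine ⟨q, hq, fun v ↦ ?_⟩
  have hv : v ∈ Submodule.span B (Set.range (universal c s)) :=
    span_range_universal c s ▸ Submodule.mem_top
  refine Submodule.span_le (p := N.comap (LinearMap.lsmul B _ _)) |>.2 ?_ hv
  rintro _ ⟨x, rfl⟩
  exact (Submodule.Quotient.mk_eq_zero N).1 (hzero x)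

theorem exists_mem_annihilator_map_ne_zero {R : Type*} [CommRing R] [IsDomain R] [Algebra F R]
    [Group.FG G] (hK : commutator G ≤ K) (f : B →ₐ[F] R) (hc : ∀ x ∈ K, f (c x) = 1)
    (ht : Transcendental F (f (c s))) :
    ∃ D ∈ Module.annihilator B (AlexanderModule c s), f D ≠ 0 := by
  have : (RingHom.ker f).IsPrime := RingHom.ker_isPrime _
  obtain ⟨q, hq, hmem⟩ := exists_aeval_smul_mem (c := c) (s := s) F hK (I := RingHom.ker f)
    fun x hx ↦ by rw [RingHom.mem_ker, map_sub, hc x hx, map_one, sub_self]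
  refine exists_mem_annihilator_notMem (RingHom.ker f) (fun h ↦ hq ?_) hmem
  rw [RingHom.mem_ker, ← Polynomial.aeval_algHom_apply] at h
  exact transcendental_iff.1 ht q h

end Field

end AlexanderModule

end AlexanderModule

theorem finite_of_smul_eq_zero {F L M : Type*} [Field F] [CommRing L] [IsDomain L]
    [Ring.DimensionLEOne L] [Algebra F L] [Algebra.FiniteType F L] [AddCommGroup M] [Module F M]
    [Module L M] [IsScalarTower F L M] [Module.Finite L M] {p : L} (hp : p ≠ 0)
    (h : ∀ v : M, p • v = 0) : Module.Finite F M := by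
  have : IsNoetherianRing L := Algebra.FiniteType.isNoetherianRing F L
  have hlen : IsFiniteLength L (L ⧸ Ideal.span {p}) :=
    isFiniteLength_quotient_span_singleton L (mem_nonZeroDivisors_of_ne_zero hp)
  have : IsArtinianRing (L ⧸ Ideal.span {p}) :=
    isArtinian_of_tower L (isFiniteLength_iff_isNoetherian_isArtinian.1 hlen).2
  have : Module.Finite F (L ⧸ Ideal.span {p}) := Module.finite_of_isArtinianRing F _
  have htors : Module.IsTorsionBySet L M (Ideal.span {p} : Ideal L) :=
    (Module.isTorsionBySet_span_singleton_iff p).2 fun m ↦ h m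
  let := htors.module
  have : IsScalarTower L (L ⧸ Ideal.span {p}) M := htors.isScalarTower
  have : IsScalarTower F (L ⧸ Ideal.span {p}) M := htors.isScalarTower
  have : Module.Finite (L ⧸ Ideal.span {p}) M := .of_restrictScalars_finite L _ _
  exact .trans (L ⧸ Ideal.span {p}) M

instance (F : Type*) [Field F] : Ring.DimensionLEOne (MonoidAlgebra F (Multiplicative ℤ)) := by
  have := Ring.DimensionLEOne.localization (LaurentPolynomial F)
    (powers_le_nonZeroDivisors_of_noZeroDivisors (Polynomial.X_ne_zero (R := F)))
  exact .of_ringEquiv (AddMonoidAlgebra.toMultiplicative F ℤ).symm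

theorem mapDomain_eq_zero_of_forall_eq {α β γ R : Type*} [AddCommMonoid R] {f : α → β} {g : α → γ}
    {x : α →₀ R} (h : ∀ a ∈ x.support, ∀ b ∈ x.support, g a = g b → f a = f b)
    (hx : x.mapDomain g = 0) : x.mapDomain f = 0 := by
  rcases isEmpty_or_nonempty β with hβ | hβ
  · exact Subsingleton.elim _ _
  obtain ⟨θ, hθ⟩ : ∃ θ : γ → β, ∀ a ∈ x.support, θ (g a) = f a := by
    have hfact : Function.FactorsThrough (fun a : x.support ↦ f a) (fun a ↦ g a) :=
      fun a b hab ↦ h a a.2 b b.2 hab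
    exact ⟨Function.extend (fun a : x.support ↦ g a) (fun a ↦ f a) fun _ ↦ Classical.arbitrary β,
      fun a ha ↦ hfact.extend_apply _ ⟨a, ha⟩⟩
  rw [← Finsupp.mapDomain_congr (f := θ ∘ g) hθ, Finsupp.mapDomain_comp, hx,
    Finsupp.mapDomain_zero]

open Polynomial in
theorem coeff_aeval_of {F A : Type*} [CommSemiring F] [Monoid A] {a : A}
    (ha : Function.Injective (a ^ · : ℕ → A)) (q : F[X]) (n : ℕ) :
    (aeval (MonoidAlgebra.of F A a) q).coeff (a ^ n) = q.coeff n := by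
  induction q using Polynomial.induction_on' with
  | add p q hp hq =>
    simp only [map_add, MonoidAlgebra.coeff_add, Finsupp.add_apply, hp, hq, coeff_add]
  | monomial m r =>
    rw [aeval_monomial, ← map_pow]
    simp [coeff_monomial, Finsupp.single_apply_left ha, Finsupp.single_apply]

theorem transcendental_of {F A : Type*} [CommRing F] [LeftCancelMonoid A] {a : A}
    (ha : ¬ IsOfFinOrder a) : Transcendental F (MonoidAlgebra.of F A a) :=
  transcendental_iff.2 fun q hq ↦ Polynomial.ext fun n ↦ by
    rw [← coeff_aeval_of (injective_pow_iff_not_isOfFinOrder.2 ha), hq]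
    simp

section KernelCocycle

variable {F G A : Type*} [Group G]

section Group

variable [CommRing F] [Group A] {φ : G →* A} {σ : A →* G} (hσ : ∀ a, φ (σ a) = a)

variable (F φ σ) in
/-- The representation of `A` on `H₁(ker φ; F)` by conjugation along a section `σ` of
`φ : G →* A`. -/
noncomputable abbrev kernelRepresentation : Representation F A (FirstHomology F φ.ker) :=
  (FirstHomology.conj F φ.ker).comp σ

include hσ

/-- The projection of `G` onto the kernel of a split homomorphism `φ`, along its section `σ`. -/
def kernelProjection (x : G) : φ.ker :=
  ⟨x * (σ (φ x))⁻¹, by rw [MonoidHom.mem_ker, map_mul, map_inv, hσ, mul_inv_cancel]⟩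

theorem kernelProjection_mul (x y : G) :
    kernelProjection hσ (x * y) =
      kernelProjection hσ x * MulAut.conjNormal (σ (φ x)) (kernelProjection hσ y) := by
  ext
  simp only [kernelProjection, Subgroup.coe_mul, MulAut.conjNormal_apply, map_mul]
  group

theorem kernelProjection_coe (x : φ.ker) : kernelProjection hσ x = x := by
  ext
  simp only [kernelProjection, MonoidHom.mem_ker.1 x.2, map_one, inv_one, mul_one]

variable (F)

/-- The crossed homomorphism to `H₁(ker φ; F)` extending the class map of `ker φ`. -/
noncomputable def kernelCocycle (x : G) : (kernelRepresentation F φ σ).asModule :=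
  (kernelRepresentation F φ σ).asModuleEquiv.symm (.mk F (kernelProjection hσ x))

theorem isCrossedHom_kernelCocycle :
    IsCrossedHom ((MonoidAlgebra.of F A).comp φ) (kernelCocycle F hσ) := by
  intro x y
  simp only [kernelCocycle, MonoidHom.comp_apply, ← Representation.asModuleEquiv_symm_map_rho,
    kernelProjection_mul, FirstHomology.mk_mul, map_add, FirstHomology.conj_mk]

theorem span_kernelCocycle_ker :
    Submodule.span (MonoidAlgebra F A) (Set.range fun x : φ.ker ↦ kernelCocycle F hσ x) = ⊤ := by
  have hrange : (Set.range fun x : φ.ker ↦ kernelCocycle F hσ x) =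
      (kernelRepresentation F φ σ).asModuleEquiv.symm.toLinearMap ''
        Set.range (FirstHomology.mk F) := by
    rw [← Set.range_comp]
    simp only [kernelCocycle, kernelProjection_coe]
    rfl
  apply Submodule.span_eq_top_of_span_eq_top F
  rw [hrange, Submodule.span_image, FirstHomology.span_range_mk, Submodule.map_top,
    LinearEquiv.range]

theorem finite_kernelRepresentation_asModule [Group.FG G] :
    Module.Finite (MonoidAlgebra F A) (kernelRepresentation F φ σ).asModule := by
  refine (isCrossedHom_kernelCocycle F hσ).finite_of_span_range_eq_top (top_le_iff.1 ?_)
  rw [← span_kernelCocycle_ker F hσ]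
  exact Submodule.span_mono (Set.range_subset_iff.2 fun x ↦ Set.mem_range_self _)

end Group

section CommGroup

variable [CommRing F] [CommGroup A] {φ : G →* A} {σ : A →* G} (hσ : ∀ a, φ (σ a) = a)

include hσ

theorem smul_asModule_eq_zero {s : G} {p : MonoidAlgebra F A}
    (h : ∀ d : G → (kernelRepresentation F φ σ).asModule,
      IsCrossedHom ((MonoidAlgebra.of F A).comp φ) d → d s = 0 → ∀ x, p • d x = 0)
    (v : (kernelRepresentation F φ σ).asModule) :
    (p * (1 - MonoidAlgebra.of F A (φ s))) • v = 0 := by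
  have hzero : LinearMap.lsmul _ (kernelRepresentation F φ σ).asModule
      (p * (1 - MonoidAlgebra.of F A (φ s))) = 0 := by
    refine LinearMap.ext_on_range (span_kernelCocycle_ker F hσ) fun x ↦ ?_
    have := h _ ((isCrossedHom_kernelCocycle F hσ).normalize s) (by rw [sub_self]) x
    rwa [MonoidHom.comp_apply _ _ (x : G), MonoidHom.mem_ker.1 x.2, map_one, sub_self, zero_smul,
      sub_zero, ← mul_smul] at this
  exact LinearMap.congr_fun hzero v

end CommGroup

theorem finiteDimensional_firstHomology_ker [Field F] [CommGroup A] [IsDomain (MonoidAlgebra F A)]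
    [Ring.DimensionLEOne (MonoidAlgebra F A)] [Algebra.FiniteType F (MonoidAlgebra F A)]
    [Group.FG G] {φ : G →* A} {σ : A →* G} (hσ : ∀ a, φ (σ a) = a) {s : G} (hs : φ s ≠ 1)
    {p : MonoidAlgebra F A} (hp : p ≠ 0)
    (h : ∀ d : G → (kernelRepresentation F φ σ).asModule,
      IsCrossedHom ((MonoidAlgebra.of F A).comp φ) d → d s = 0 → ∀ x, p • d x = 0) :
    FiniteDimensional F (FirstHomology F φ.ker) := by
  have hp' : p * (1 - MonoidAlgebra.of F A (φ s)) ≠ 0 := by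
    refine mul_ne_zero hp (sub_ne_zero.2 fun h ↦ hs ?_)
    exact MonoidAlgebra.of_injective (h.symm.trans (map_one _).symm)
  have := finite_kernelRepresentation_asModule F hσ
  have := finite_of_smul_eq_zero (F := F) hp' (smul_asModule_eq_zero hσ h)
  exact .equiv (kernelRepresentation F φ σ).asModuleEquiv

end KernelCocycle

section Specialization

variable {F G A : Type*} [Field F] [Group G]

variable (F G) in
/-- The tautological homomorphism `G → F[Ab G]`, through which `G` acts on the `F[Ab G]`-modules
considered here. -/
noncomputable def toAbelianizationRing : G →* MonoidAlgebra F (Abelianization G) :=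
  (MonoidAlgebra.of F _).comp Abelianization.of

variable (F) in
/-- The specialization `F[Ab G] → F[A]` of group rings induced by `χ : G →* A`. -/
noncomputable def specialize [CommGroup A] (χ : G →* A) :
    MonoidAlgebra F (Abelianization G) →ₐ[F] MonoidAlgebra F A :=
  MonoidAlgebra.mapDomainAlgHom F F (Abelianization.lift χ)

theorem specialize_toAbelianizationRing [CommGroup A] (χ : G →* A) (x : G) :
    specialize F χ (toAbelianizationRing F G x) = MonoidAlgebra.of F A (χ x) := by
  simp [specialize, toAbelianizationRing]

theorem abelianizationLift_eq_iff [CommGroup A] (χ : G →* A) (a b : Abelianization G) :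
    Abelianization.lift χ a = Abelianization.lift χ b ↔ χ (a.out / b.out) = 1 := by
  rw [map_div, div_eq_one]
  conv_lhs => rw [← QuotientGroup.out_eq' a, ← QuotientGroup.out_eq' b]
  rfl

theorem exists_finset_specialize_ne_zero [CommGroup A] {ψ : G →* A}
    {D : MonoidAlgebra F (Abelianization G)} (hD : specialize F ψ D ≠ 0) :
    ∃ S : Finset G, (∀ x ∈ S, ψ x ≠ 1) ∧ ∀ {B : Type*} [CommGroup B] (χ : G →* B),
      (∀ x ∈ S, χ x ≠ 1) → specialize F χ D ≠ 0 := by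
  classical
  let T := (D.coeff.support ×ˢ D.coeff.support).image fun a ↦ a.1.out / a.2.out
  refine ⟨T.filter (ψ · ≠ 1), fun x hx ↦ (Finset.mem_filter.1 hx).2, fun χ hχ hzero ↦ hD ?_⟩
  refine MonoidAlgebra.coeff_injective (mapDomain_eq_zero_of_forall_eq (fun a ha b hb hab ↦ ?_)
    (congrArg MonoidAlgebra.coeff hzero))
  by_contra hne
  have hT : a.out / b.out ∈ T := Finset.mem_image_of_mem _ (Finset.mk_mem_product ha hb)
  exact hχ _ (Finset.mem_filter.2 ⟨hT, fun h ↦ hne ((abelianizationLift_eq_iff ψ a b).2 h)⟩)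
    ((abelianizationLift_eq_iff χ a b).1 hab)

variable [Group.FG G] {s : G}

theorem exists_mem_annihilator_specialize_ne_zero [CommGroup A] [IsMulTorsionFree A]
    [UniqueProds A] {ψ : G →* A} (hs : ψ s ≠ 1) [FiniteDimensional F (FirstHomology F ψ.ker)] :
    ∃ D ∈ Module.annihilator _ (AlexanderModule (toAbelianizationRing F G) s),
      specialize F ψ D ≠ 0 := by
  refine AlexanderModule.exists_mem_annihilator_map_ne_zero
    (Abelianization.commutator_subset_ker ψ) (specialize F ψ) (fun x hx ↦ ?_) ?_
  · rw [specialize_toAbelianizationRing, MonoidHom.mem_ker.1 hx, map_one]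
  · rw [specialize_toAbelianizationRing]
    exact transcendental_of (not_isOfFinOrder_of_isMulTorsionFree hs)

theorem finiteDimensional_of_specialize_ne_zero [CommGroup A] [IsDomain (MonoidAlgebra F A)]
    [Ring.DimensionLEOne (MonoidAlgebra F A)] [Algebra.FiniteType F (MonoidAlgebra F A)]
    {φ : G →* A} {σ : A →* G} (hσ : ∀ a, φ (σ a) = a) (hs : φ s ≠ 1)
    {D : MonoidAlgebra F (Abelianization G)}
    (hD : D ∈ Module.annihilator _ (AlexanderModule (toAbelianizationRing F G) s))
    (hφD : specialize F φ D ≠ 0) : FiniteDimensional F (FirstHomology F φ.ker) := by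
  have hc : (specialize F φ : _ →* _).comp (toAbelianizationRing F G) =
      (MonoidAlgebra.of F A).comp φ := MonoidHom.ext (specialize_toAbelianizationRing φ)
  refine finiteDimensional_firstHomology_ker hσ hs hφD fun d hd hds x ↦ ?_
  exact AlexanderModule.map_smul_eq_zero (specialize F φ).toRingHom hD (hc ▸ hd) hds x

end Specialization

section IntegralCharacter

theorem exists_split_ker_eq {G : Type*} [Group G] {φ : G →* Multiplicative ℤ} (hφ : φ ≠ 1) :
    ∃ (φ' : G →* Multiplicative ℤ) (σ : Multiplicative ℤ →* G),
      (∀ a, φ' (σ a) = a) ∧ φ'.ker = φ.ker := by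
  obtain ⟨s, hs⟩ := DFunLike.ne_iff.1 hφ
  have : Infinite φ.range := by
    refine .of_injective (φ.rangeRestrict s ^ · : ℕ → φ.range)
      (injective_pow_iff_not_isOfFinOrder.2 (not_isOfFinOrder_of_isMulTorsionFree fun h ↦ hs ?_))
    exact congrArg Subtype.val h
  let e : φ.range ≃* Multiplicative ℤ := intCyclicMulEquiv.symm
  let φ' : G →* Multiplicative ℤ := (e : φ.range →* Multiplicative ℤ).comp φ.rangeRestrict
  obtain ⟨t, ht⟩ : ∃ t, φ' t = .ofAdd 1 := e.surjective.comp φ.rangeRestrict_surjective _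
  refine ⟨φ', zpowersHom G t, fun a ↦ ?_, ?_⟩
  · rw [zpowersHom_apply, map_zpow, ht, ← ofAdd_zsmul, smul_eq_mul, mul_one, ofAdd_toAdd]
  · rw [MonoidHom.ker_comp_of_injective _ _ e.injective, MonoidHom.ker_rangeRestrict]

variable {F G A : Type*} [Field F] [Group G] [Group.FG G]

theorem exists_finset_forall_finiteDimensional [CommGroup A] [IsMulTorsionFree A] [UniqueProds A]
    {ψ : G →* A} (hψ : ψ ≠ 1) [FiniteDimensional F (FirstHomology F ψ.ker)] :
    ∃ S : Finset G, (∀ x ∈ S, ψ x ≠ 1) ∧ ∀ φ : G →* Multiplicative ℤ,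
      (∀ x ∈ S, φ x ≠ 1) → FiniteDimensional F (FirstHomology F φ.ker) := by
  classical
  obtain ⟨s, hs⟩ := DFunLike.ne_iff.1 hψ
  obtain ⟨D, hD, hψD⟩ := exists_mem_annihilator_specialize_ne_zero (F := F) hs
  obtain ⟨S, hψS, hS⟩ := exists_finset_specialize_ne_zero hψD
  refine ⟨insert s S, Finset.forall_mem_insert _ _ _ |>.2 ⟨hs, hψS⟩, fun φ hφ ↦ ?_⟩
  obtain ⟨hφs, hφS⟩ := Finset.forall_mem_insert _ _ _ |>.1 hφ
  obtain ⟨φ', σ, hσ, hker⟩ := exists_split_ker_eq (DFunLike.ne_iff.2 ⟨s, hφs⟩)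
  have hne {x : G} (hx : φ x ≠ 1) : φ' x ≠ 1 := by
    rwa [Ne, ← MonoidHom.mem_ker, hker]
  rw [← hker]
  exact finiteDimensional_of_specialize_ne_zero hσ (hne hφs) hD
    (hS φ' fun x hx ↦ hne (hφS x hx))

end IntegralCharacter

section Openness

open Filter Topology

variable {G ι : Type*} [Group G] {g : ι → G}

theorem exists_map_eq_prod_zpow [Fintype ι] (hgen : Subgroup.closure (Set.range g) = ⊤) (x : G) :
    ∃ n : ι → ℤ, ∀ {A : Type*} [CommGroup A] (χ : G →* A), χ x = ∏ i, χ (g i) ^ n i := by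
  have hx : Abelianization.of x ∈ Subgroup.closure (Set.range fun i ↦ Abelianization.of (g i)) := by
    rw [show (fun i ↦ Abelianization.of (g i)) = Abelianization.of ∘ g from rfl, Set.range_comp,
      ← MonoidHom.map_closure, hgen]
    exact Subgroup.mem_map_of_mem _ trivial
  obtain ⟨n, hn⟩ := Subgroup.exists_of_mem_closure_range _ _ hx
  refine ⟨n, fun χ ↦ ?_⟩
  simpa using congrArg (Abelianization.lift χ) hn

theorem eventually_forall_map_ne_one [Finite ι] (hgen : Subgroup.closure (Set.range g) = ⊤)
    {ψ : G →* Multiplicative ℝ} {x : G} (hx : ψ x ≠ 1) :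
    ∀ᶠ ε in 𝓝 (0 : ℝ), ∀ (φ : G →* Multiplicative ℝ) (r : ℝ),
      (∀ i, |r * (φ (g i)).toAdd - (ψ (g i)).toAdd| < ε) → φ x ≠ 1 := by
  cases nonempty_fintype ι
  obtain ⟨n, hn⟩ := exists_map_eq_prod_zpow hgen x
  have hsum (χ : G →* Multiplicative ℝ) : (χ x).toAdd = ∑ i, n i * (χ (g i)).toAdd := by
    rw [hn, toAdd_prod]
    simp
  have hlim : Tendsto (fun ε : ℝ ↦ (∑ i, |(n i : ℝ)|) * ε) (𝓝 0) (𝓝 0) :=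
    (continuous_const_mul _).tendsto' 0 0 (mul_zero _)
  filter_upwards [hlim.eventually_lt_const (abs_pos.2 (toAdd_eq_zero.not.2 hx))] with ε hε φ r hr hφ
  refine hε.not_ge ?_
  calc |(ψ x).toAdd| = |r * (φ x).toAdd - (ψ x).toAdd| := by simp [hφ]
    _ = |∑ i, n i * (r * (φ (g i)).toAdd - (ψ (g i)).toAdd)| := by
      rw [hsum, hsum, Finset.mul_sum, ← Finset.sum_sub_distrib]
      congr! 2
      ring
    _ ≤ ∑ i, |(n i : ℝ)| * ε := by
      refine (Finset.abs_sum_le_sum_abs _ _).trans (Finset.sum_le_sum fun i _ ↦ ?_)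
      rw [abs_mul]
      exact mul_le_mul_of_nonneg_left (hr i).le (abs_nonneg _)
    _ = (∑ i, |(n i : ℝ)|) * ε := (Finset.sum_mul ..).symm

/-- The inclusion `ℤ → ℝ`, for turning integral characters into real ones. -/
def multiplicativeIntCast : Multiplicative ℤ →* Multiplicative ℝ :=
  (Int.castAddHom ℝ).toMultiplicative

theorem multiplicativeIntCast_injective : Function.Injective multiplicativeIntCast :=
  fun _ _ h ↦ Int.cast_injective (α := ℝ) h

theorem stmt_6_general {F : Type*} [Field F] [Finite ι]
    (hgen : Subgroup.closure (Set.range g) = ⊤) {ψ : G →* Multiplicative ℝ} (hψ : ψ ≠ 1)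
    (hfin : FiniteDimensional F (F ⊗[ℤ] Additive (Abelianization ψ.ker))) :
    ∃ ε : ℝ, 0 < ε ∧ ∀ φ : G →* Multiplicative ℤ,
      (∃ r : ℝ, ∀ i, |r * ((φ (g i)).toAdd : ℤ) - (ψ (g i)).toAdd| < ε) →
      FiniteDimensional F (F ⊗[ℤ] Additive (Abelianization φ.ker)) := by
  have : Group.FG G := Group.fg_iff.2 ⟨_, hgen, Set.finite_range g⟩
  obtain ⟨S, hψS, hS⟩ := exists_finset_forall_finiteDimensional (F := F) hψ
  have hnear := (Finset.eventually_all S).2 fun x hx ↦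
    eventually_forall_map_ne_one hgen (hψS x hx)
  obtain ⟨ε, hpos, hε⟩ :=
    (eventually_mem_nhdsWithin.and (hnear.filter_mono (nhdsWithin_le_nhds (s := .Ioi 0)))).exists
  refine ⟨ε, hpos, fun φ ⟨r, hr⟩ ↦ hS φ fun x hx h ↦ ?_⟩
  exact hε x hx (multiplicativeIntCast.comp φ) r hr
    (by rw [MonoidHom.comp_apply, h, map_one])

end Openness

/-- Group-theoretic form of Lemma 3.2: for a finitely presented group `G`,
finite-dimensionality of `ℚ ⊗ Ab(ker ψ)` (nonvanishing of the Alexander polynomial at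
the primitive class `ψ`) is a projectively open condition: every surjective
`φ : G → ℤ` which is proportionally `ε`-close to `ψ` on a finite generating family
also has `ℚ ⊗ Ab(ker φ)` finite-dimensional. -/
theorem stmt_6 (G : Type*) [Group G]
    (hfp : ∃ (N : ℕ) (rels : Finset (FreeGroup (Fin N))),
      Nonempty (G ≃* PresentedGroup (rels : Set (FreeGroup (Fin N)))))
    (k : ℕ) (g : Fin k → G) (hgen : Subgroup.closure (Set.range g) = ⊤)
    (ψ : G →* Multiplicative ℤ) (hψ : Function.Surjective ψ)
    (hfin : FiniteDimensional ℚ (ℚ ⊗[ℤ] Additive (Abelianization ψ.ker))) :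
    ∃ ε : ℝ, 0 < ε ∧
      ∀ φ : G →* Multiplicative ℤ, Function.Surjective φ →
        (∃ r : ℚ, r ≠ 0 ∧ ∀ i : Fin k,
          |(r : ℝ) * ((Multiplicative.toAdd (φ (g i)) : ℤ) : ℝ)
            - ((Multiplicative.toAdd (ψ (g i)) : ℤ) : ℝ)| < ε) →
        FiniteDimensional ℚ (ℚ ⊗[ℤ] Additive (Abelianization φ.ker)) := by
  have hker : (multiplicativeIntCast.comp ψ).ker = ψ.ker :=
    ψ.ker_comp_of_injective _ multiplicativeIntCast_injective
  have hne : multiplicativeIntCast.comp ψ ≠ 1 := by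
    obtain ⟨x, hx⟩ := hψ (.ofAdd 1)
    refine DFunLike.ne_iff.2 ⟨x, fun h ↦ ?_⟩
    have hψx : ψ x = 1 := (map_eq_one_iff _ multiplicativeIntCast_injective).1 h
    exact absurd (hx.symm.trans hψx) (by decide)
  obtain ⟨ε, hε, h⟩ := stmt_6_general (F := ℚ) hgen hne (hker ▸ hfin)
  exact ⟨ε, hε, fun φ _ ⟨r, _, hr⟩ ↦ h φ ⟨r, hr⟩⟩
end

section
/- Fix an integer e, and let G be the presented group on three generators a, b, c with relators a b a⁻¹ b⁻¹ c^{−e}, a c a⁻¹ c⁻¹, and b c b⁻¹ c⁻¹ (the fundamental group of the oriented circle bundle of Euler number e over the oriented torus). Then: (a) the ℚ-vector space ℚ ⊗_ℤ Ab(G) has dimension 2 if e ≠ 0 and dimension 3 if e = 0; and (b) for every surjective group homomorphism φ : G → ℤ, the ℚ-vector space ℚ ⊗_ℤ Ab(ker φ) has dimension exactly 2. (This is the computation observed in Example 7.1: b₁(N(e)) is 2 or 3 according to whether e ≠ 0 or e = 0, and the Alexander polynomial with respect to every primitive class ψ satisfies Δ^ψ_N(t) ≐ (t−1)², in particular it is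 nonvanishing and of degree 2.) -/
open TensorProduct

/-!
Sending `(x, y, z)` to `b ^ y * a ^ x * c ^ z` identifies `G` with a Heisenberg group on `ℤ³`. Its
logarithm `(x, y, 2 * z - e * x * y)` (doubled in the last entry, to stay integral) turns the
product into `u + v + (0, 0, det (u, v, (0, 0, e)))`, so it is additive wherever that determinant
vanishes. Every `φ : G → ℤ` is, up to a factor of two, the restriction along the logarithm of a
functional on `ℤ³` killing `(0, 0, e)`. If `φ ≠ 1`, then for `g` and `h` in `ker φ` the three rows
of the determinant lie in the kernel of a nonzero functional. Hence the logarithm embeds `ker φ`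
as a subgroup of finite index in a lattice of rank `3 - 1 = 2`. When `e = 0` the determinant is
always zero and the logarithm embeds `G` itself with finite index in `ℤ³`; when `e ≠ 0` the
relation `⁅a, b⁆ = c ^ e` makes `c` torsion in `Ab(G)`, leaving the two coordinates `x` and `y`.
-/

section Rank

theorem finrank_eq_of_isTorsion_ker_of_isTorsion_coker {R M N : Type*} [CommRing R] [IsDomain R]
    [AddCommGroup M] [Module R M] [AddCommGroup N] [Module R N] (f : M →ₗ[R] N)
    (hker : Module.IsTorsion R f.ker) (hcoker : Module.IsTorsion R (N ⧸ f.range)) :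
    Module.finrank R M = Module.finrank R N := by
  have hM := f.lift_rank_range_add_rank_ker
  have hN := f.range.rank_quotient_add_rank
  rw [hker.rank_eq_zero, Cardinal.lift_zero, add_zero] at hM
  rw [hcoker.rank_eq_zero, zero_add] at hN
  rw [hN] at hM
  simpa only [Module.finrank, Cardinal.toNat_lift] using (congrArg Cardinal.toNat hM).symm

theorem finrank_ker_add_one_of_dual_ne_zero {R M : Type*} [CommRing R] [IsDomain R]
    [AddCommGroup M] [Module R M] [Module.Finite R M] {l : Module.Dual R M} (hl : l ≠ 0) :
    Module.finrank R l.ker + 1 = Module.finrank R M := by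
  have hle : Module.finrank R l.range ≤ 1 := by
    simpa only [Module.finrank_self] using l.range.finrank_le
  have hne : Module.finrank R l.range ≠ 0 := by
    rwa [Ne, Submodule.finrank_eq_zero, LinearMap.range_eq_bot]
  have hadd := l.ker.finrank_quotient_add_finrank
  rw [l.quotKerEquivRange.finrank_eq] at hadd
  omega

theorem det_eq_zero_of_dual_apply_row_eq_zero {R n : Type*} [CommRing R] [IsDomain R] [Fintype n]
    [DecidableEq n] {l : Module.Dual R (n → R)} (hl : l ≠ 0) {M : Matrix n n R}
    (hM : ∀ i, l (M.row i) = 0) : M.det = 0 := by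
  refine Matrix.exists_mulVec_eq_zero_iff.1 ⟨fun j => l (Pi.single j 1), fun h => hl ?_, ?_⟩
  · exact LinearMap.pi_ext' fun j => LinearMap.ext_ring (congrFun h j)
  · funext i
    rw [Pi.zero_apply, ← hM i, pi_eq_sum_univ' (M.row i), map_sum]
    simp only [map_smul, smul_eq_mul]
    rfl

end Rank

section FirstBettiNumber

variable {G H : Type*} [Group G] [Group H]

/-- The first Betti number `b₁(G) = dim H₁(G; ℚ)`, with the junk value `0` if that dimension is
infinite. -/
noncomputable def firstBettiNumber (G : Type*) [Group G] : ℕ :=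
  Module.finrank ℚ (ℚ ⊗[ℤ] Additive (Abelianization G))

theorem firstBettiNumber_congr (ι : G ≃* H) : firstBettiNumber G = firstBettiNumber H :=
  (LinearEquiv.baseChange ℤ ℚ _ _
    ι.abelianizationCongr.toAdditive.toIntLinearEquiv).finrank_eq

theorem firstBettiNumber_ker_comp_mulEquiv {P : Type*} [MulOneClass P] (φ : H →* P) (ι : G ≃* H) :
    firstBettiNumber (φ.comp (ι : G →* H)).ker = firstBettiNumber φ.ker := by
  rw [MonoidHom.ker_comp_mulEquiv]
  exact (firstBettiNumber_congr (ι.symm.subgroupMap φ.ker)).symm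

theorem firstBettiNumber_eq_finrank {V : Type*} [AddCommGroup V] (f : G →* Multiplicative V)
    (hker : ∀ g ∈ f.ker, ∃ n : ℤ, n ≠ 0 ∧ g ^ n ∈ commutator G)
    (hcoker : ∀ v : V, ∃ n : ℤ, n ≠ 0 ∧ ∃ g, f g = Multiplicative.ofAdd (n • v)) :
    firstBettiNumber G = Module.finrank ℤ V := by
  rw [firstBettiNumber, (TensorProduct.isBaseChange ℤ _ ℚ).finrank_eq]
  refine finrank_eq_of_isTorsion_ker_of_isTorsion_coker
    (Abelianization.lift f).toAdditiveLeft.toIntLinearMap ?_ ?_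
  · rintro ⟨x, hx⟩
    obtain ⟨g, rfl⟩ : ∃ g, Additive.ofMul (Abelianization.of g) = x :=
      QuotientGroup.mk_surjective x.toMul
    obtain ⟨n, hn, hg⟩ := hker g hx
    exact ⟨⟨n, mem_nonZeroDivisors_of_ne_zero hn⟩,
      Subtype.ext ((QuotientGroup.eq_one_iff (g ^ n)).2 hg)⟩
  · intro x
    obtain ⟨v, rfl⟩ := Submodule.Quotient.mk_surjective _ x
    obtain ⟨n, hn, g, hg⟩ := hcoker v
    exact ⟨⟨n, mem_nonZeroDivisors_of_ne_zero hn⟩,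
      (Submodule.Quotient.mk_eq_zero _).2 ⟨Additive.ofMul (Abelianization.of g), hg⟩⟩

end FirstBettiNumber

section Commutator

open commutatorElement

variable {G : Type*} [Group G] {a b : G}

theorem commutatorElement_zpow_right (hb : Commute ⁅a, b⁆ b) (n : ℤ) :
    ⁅a, b ^ n⁆ = ⁅a, b⁆ ^ n := by
  have h : SemiconjBy a b (⁅a, b⁆ * b) := by
    rw [SemiconjBy, commutatorElement_def]
    group
  rw [commutatorElement_def, mul_inv_eq_iff_eq_mul, mul_inv_eq_iff_eq_mul, ← hb.mul_zpow]
  exact h.zpow_right n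

theorem commutatorElement_zpow_left (ha : Commute ⁅a, b⁆ a) (n : ℤ) :
    ⁅a ^ n, b⁆ = ⁅a, b⁆ ^ n := by
  have ha' : Commute ⁅b, a⁆ a := by
    rw [← commutatorElement_inv]
    exact ha.inv_left
  rw [← commutatorElement_inv, commutatorElement_zpow_right ha', ← commutatorElement_inv a b,
    inv_zpow, inv_inv]

theorem commutatorElement_zpow_zpow (ha : Commute ⁅a, b⁆ a) (hb : Commute ⁅a, b⁆ b) (m n : ℤ) :
    ⁅a ^ m, b ^ n⁆ = ⁅a, b⁆ ^ (m * n) := by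
  have hm := commutatorElement_zpow_left ha m
  rw [commutatorElement_zpow_right (hm ▸ hb.zpow_left m), hm, zpow_mul]

theorem zpow_mul_zpow_eq_mul_commutatorElement_zpow (ha : Commute ⁅a, b⁆ a)
    (hb : Commute ⁅a, b⁆ b) (m n : ℤ) : a ^ m * b ^ n = b ^ n * a ^ m * ⁅a, b⁆ ^ (m * n) := by
  have hcomm : Commute (⁅a, b⁆ ^ (m * n)) (b ^ n * a ^ m) :=
    (hb.zpow_zpow _ n).mul_right (ha.zpow_zpow _ m)
  rw [← hcomm.eq, ← commutatorElement_zpow_zpow ha hb, commutatorElement_def]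
  group

end Commutator

/-- The integral Heisenberg group of Euler number `e`, in the normal form where `(x, y, z)` stands
for `b ^ y * a ^ x * c ^ z`, with `c` central and `⁅a, b⁆ = c ^ e`. -/
@[ext]
structure EulerHeisenberg (e : ℤ) where
  x : ℤ
  y : ℤ
  z : ℤ

namespace EulerHeisenberg

variable {e : ℤ}

instance : Mul (EulerHeisenberg e) :=
  ⟨fun g h => ⟨g.x + h.x, g.y + h.y, g.z + h.z + e * g.x * h.y⟩⟩

instance : One (EulerHeisenberg e) := ⟨⟨0, 0, 0⟩⟩

instance : Inv (EulerHeisenberg e) := ⟨fun g => ⟨-g.x, -g.y, -g.z + e * g.x * g.y⟩⟩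

@[simp] theorem mul_x (g h : EulerHeisenberg e) : (g * h).x = g.x + h.x := rfl
@[simp] theorem mul_y (g h : EulerHeisenberg e) : (g * h).y = g.y + h.y := rfl
@[simp] theorem mul_z (g h : EulerHeisenberg e) : (g * h).z = g.z + h.z + e * g.x * h.y := rfl
@[simp] theorem one_x : (1 : EulerHeisenberg e).x = 0 := rfl
@[simp] theorem one_y : (1 : EulerHeisenberg e).y = 0 := rfl
@[simp] theorem one_z : (1 : EulerHeisenberg e).z = 0 := rfl
@[simp] theorem inv_x (g : EulerHeisenberg e) : g⁻¹.x = -g.x := rfl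
@[simp] theorem inv_y (g : EulerHeisenberg e) : g⁻¹.y = -g.y := rfl
@[simp] theorem inv_z (g : EulerHeisenberg e) : g⁻¹.z = -g.z + e * g.x * g.y := rfl

instance : Group (EulerHeisenberg e) :=
  Group.ofLeftAxioms (fun g h k => by ext <;> simp only [mul_x, mul_y, mul_z] <;> ring)
    (fun g => by ext <;> simp) (fun g => by ext <;> simp)

section Log

/-- The logarithm in exponential coordinates, with the last coordinate doubled to stay integral. -/
def log (g : EulerHeisenberg e) : Fin 3 → ℤ := ![g.x, g.y, 2 * g.z - e * g.x * g.y]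

theorem log_injective : Function.Injective (log : EulerHeisenberg e → Fin 3 → ℤ) := by
  intro g h hgh
  have hx : g.x = h.x := congrFun hgh 0
  have hy : g.y = h.y := congrFun hgh 1
  have hz : 2 * g.z - e * g.x * g.y = 2 * h.z - e * h.x * h.y := congrFun hgh 2
  rw [hx, hy] at hz
  exact EulerHeisenberg.ext hx hy (by linarith)

@[simp] theorem log_one : log (1 : EulerHeisenberg e) = 0 := by
  ext i; fin_cases i <;> simp [log]

theorem log_mul (g h : EulerHeisenberg e) :
    log (g * h) =
      log g + log h + Pi.single 2 (Matrix.of ![log g, log h, Pi.single 2 e]).det := by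
  have hdet : (Matrix.of ![log g, log h, Pi.single 2 e]).det = e * (g.x * h.y - g.y * h.x) := by
    simp [log, Matrix.det_fin_three, mul_sub, mul_comm, mul_left_comm]
  rw [hdet]
  ext i
  fin_cases i
  · exact (add_zero (g.x + h.x)).symm
  · exact (add_zero (g.y + h.y)).symm
  · change 2 * (g.z + h.z + e * g.x * h.y) - e * (g.x + h.x) * (g.y + h.y) =
      2 * g.z - e * g.x * g.y + (2 * h.z - e * h.x * h.y) + e * (g.x * h.y - g.y * h.x)
    ring

theorem log_mul_of_dual {l : Module.Dual ℤ (Fin 3 → ℤ)} (hl : l ≠ 0)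
    (hle : l (Pi.single 2 e) = 0) {g h : EulerHeisenberg e} (hg : l (log g) = 0)
    (hh : l (log h) = 0) : log (g * h) = log g + log h := by
  rw [log_mul, det_eq_zero_of_dual_apply_row_eq_zero hl, Pi.single_zero, add_zero]
  intro i
  fin_cases i
  exacts [hg, hh, hle]

@[simp] theorem log_inv (g : EulerHeisenberg e) : log g⁻¹ = -log g := by
  ext i
  fin_cases i
  · rfl
  · rfl
  · change 2 * (-g.z + e * g.x * g.y) - e * -g.x * -g.y = -(2 * g.z - e * g.x * g.y)
    ring

theorem log_pow (g : EulerHeisenberg e) (n : ℕ) : log (g ^ n) = n • log g := by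
  induction n with
  | zero => simp only [pow_zero, log_one, zero_smul]
  | succ n ih =>
    have hdet : (Matrix.of ![n • log g, log g, Pi.single 2 e]).det = 0 := by
      simp [Matrix.det_fin_three, mul_assoc, mul_comm, mul_left_comm]
    rw [pow_succ, log_mul, ih, hdet, Pi.single_zero, add_zero, succ_nsmul]

theorem log_zpow (g : EulerHeisenberg e) (n : ℤ) : log (g ^ n) = n • log g := by
  obtain ⟨m, rfl | rfl⟩ := n.eq_nat_or_neg <;> simp [log_pow]

theorem exists_log_eq_two_smul (e : ℤ) (v : Fin 3 → ℤ) :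
    ∃ g : EulerHeisenberg e, log g = (2 : ℤ) • v := by
  refine ⟨⟨2 * v 0, 2 * v 1, v 2 + 2 * e * v 0 * v 1⟩, ?_⟩
  ext i
  fin_cases i
  · rfl
  · rfl
  · change 2 * (v 2 + 2 * e * v 0 * v 1) - e * (2 * v 0) * (2 * v 1) = 2 * v 2
    ring

end Log

section Generators

open commutatorElement

/-- The standard generators `a`, `b`, `c`. -/
def gen (e : ℤ) : Fin 3 → EulerHeisenberg e := ![⟨1, 0, 0⟩, ⟨0, 1, 0⟩, ⟨0, 0, 1⟩]

theorem gen_zero_zpow (n : ℤ) : gen e 0 ^ n = ⟨n, 0, 0⟩ :=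
  log_injective <| by
    rw [log_zpow]
    simp [log, gen]

theorem gen_one_zpow (n : ℤ) : gen e 1 ^ n = ⟨0, n, 0⟩ :=
  log_injective <| by
    rw [log_zpow]
    simp [log, gen]

theorem gen_two_zpow (n : ℤ) : gen e 2 ^ n = ⟨0, 0, n⟩ :=
  log_injective <| by
    rw [log_zpow]
    simp [log, gen, mul_comm]

theorem eq_zpow_mul_zpow_mul_zpow (g : EulerHeisenberg e) :
    g = gen e 1 ^ g.y * gen e 0 ^ g.x * gen e 2 ^ g.z := by
  rw [gen_zero_zpow, gen_one_zpow, gen_two_zpow]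
  ext <;> simp

theorem commutatorElement_gen_zero_one : ⁅gen e 0, gen e 1⁆ = gen e 2 ^ e := by
  rw [gen_two_zpow, commutatorElement_def]
  ext <;> simp [gen]

theorem commutatorElement_gen_two (g : EulerHeisenberg e) : ⁅g, gen e 2⁆ = 1 := by
  rw [commutatorElement_eq_one_iff_mul_comm]
  ext <;> simp [gen, add_comm]

theorem hom_ext {M : Type*} [Group M] {f₁ f₂ : EulerHeisenberg e →* M}
    (h : ∀ i, f₁ (gen e i) = f₂ (gen e i)) : f₁ = f₂ := by
  ext g
  rw [eq_zpow_mul_zpow_mul_zpow g]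
  simp only [map_mul, map_zpow, h]

end Generators

section Presentation

open commutatorElement

/-- The homomorphism sending the standard generators `a`, `b`, `c` to `u 0`, `u 1`, `u 2`. -/
def lift {G : Type*} [Group G] (u : Fin 3 → G) (h₀₁ : ⁅u 0, u 1⁆ = u 2 ^ e)
    (h₀₂ : Commute (u 0) (u 2)) (h₁₂ : Commute (u 1) (u 2)) : EulerHeisenberg e →* G :=
  MonoidHom.mk' (fun g => u 1 ^ g.y * u 0 ^ g.x * u 2 ^ g.z) fun g h => by
    have hc₀ (m n : ℤ) : Commute (u 2 ^ m) (u 0 ^ n) := h₀₂.symm.zpow_zpow m n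
    have hc₁ (m n : ℤ) : Commute (u 2 ^ m) (u 1 ^ n) := h₁₂.symm.zpow_zpow m n
    have hswap : u 0 ^ g.x * u 1 ^ h.y = u 1 ^ h.y * u 0 ^ g.x * u 2 ^ (e * g.x * h.y) := by
      rw [zpow_mul_zpow_eq_mul_commutatorElement_zpow (h₀₁ ▸ h₀₂.symm.zpow_left e)
        (h₀₁ ▸ h₁₂.symm.zpow_left e), h₀₁, ← zpow_mul, ← mul_assoc]
    calc u 1 ^ (g.y + h.y) * u 0 ^ (g.x + h.x) * u 2 ^ (g.z + h.z + e * g.x * h.y)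
        = u 1 ^ g.y * (u 1 ^ h.y * u 0 ^ g.x * u 2 ^ (e * g.x * h.y)) * u 0 ^ h.x *
            (u 2 ^ g.z * u 2 ^ h.z) := by
          rw [add_comm _ (e * g.x * h.y)]
          simp only [zpow_add, mul_assoc, (hc₀ _ h.x).left_comm]
      _ = u 1 ^ g.y * (u 0 ^ g.x * u 1 ^ h.y) * u 0 ^ h.x * (u 2 ^ g.z * u 2 ^ h.z) := by
          rw [hswap]
      _ = u 1 ^ g.y * u 0 ^ g.x * u 2 ^ g.z * (u 1 ^ h.y * u 0 ^ h.x * u 2 ^ h.z) := by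
          simp only [mul_assoc, (hc₀ g.z h.x).left_comm, (hc₁ g.z h.y).left_comm]

theorem lift_gen {G : Type*} [Group G] (u : Fin 3 → G) (h₀₁ : ⁅u 0, u 1⁆ = u 2 ^ e)
    (h₀₂ : Commute (u 0) (u 2)) (h₁₂ : Commute (u 1) (u 2)) (i : Fin 3) :
    lift u h₀₁ h₀₂ h₁₂ (gen e i) = u i := by
  fin_cases i <;> simp [lift, gen]

/-- The relators of the fundamental group of the circle bundle of Euler number `e` over the torus,
on the generators `a`, `b`, `c` indexed by `0`, `1`, `2`. -/
def relators (e : ℤ) : Set (FreeGroup (Fin 3)) :=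
  let a : FreeGroup (Fin 3) := .of 0
  let b : FreeGroup (Fin 3) := .of 1
  let c : FreeGroup (Fin 3) := .of 2
  {⁅a, b⁆ * c ^ (-e), ⁅a, c⁆, ⁅b, c⁆}

theorem freeGroupLift_gen_eq_one {r : FreeGroup (Fin 3)} (hr : r ∈ relators e) :
    FreeGroup.lift (gen e) r = 1 := by
  obtain rfl | rfl | rfl := hr <;>
    simp only [map_mul, map_inv, map_zpow, map_commutatorElement, FreeGroup.lift_apply_of,
      commutatorElement_gen_zero_one, commutatorElement_gen_two, zpow_neg, mul_inv_cancel]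

theorem commutatorElement_of_zero_one :
    ⁅PresentedGroup.of (rels := relators e) 0, PresentedGroup.of (rels := relators e) 1⁆ =
      PresentedGroup.of 2 ^ e := by
  rw [← mul_inv_eq_one, ← zpow_neg]
  exact PresentedGroup.one_of_mem (Or.inl rfl)

theorem commute_of_zero_two :
    Commute (PresentedGroup.of 0 : PresentedGroup (relators e)) (PresentedGroup.of 2) := by
  rw [← commutatorElement_eq_one_iff_commute]
  exact PresentedGroup.one_of_mem (Or.inr (Or.inl rfl))

theorem commute_of_one_two :
    Commute (PresentedGroup.of 1 : PresentedGroup (relators e)) (PresentedGroup.of 2) := by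
  rw [← commutatorElement_eq_one_iff_commute]
  exact PresentedGroup.one_of_mem (Or.inr (Or.inr rfl))

/-- The standard presentation of the Heisenberg group. -/
def presentedGroupEquiv (e : ℤ) : PresentedGroup (relators e) ≃* EulerHeisenberg e :=
  MonoidHom.toMulEquiv (PresentedGroup.toGroup fun _ => freeGroupLift_gen_eq_one)
    (lift PresentedGroup.of commutatorElement_of_zero_one commute_of_zero_two commute_of_one_two)
    (PresentedGroup.ext fun i => by
      rw [MonoidHom.comp_apply, PresentedGroup.toGroup.of, lift_gen, MonoidHom.id_apply])
    (hom_ext fun i => by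
      rw [MonoidHom.comp_apply, lift_gen, PresentedGroup.toGroup.of, MonoidHom.id_apply])

end Presentation

section FirstBettiNumber

theorem firstBettiNumber_eq_finrank_of_log_mul {K : Subgroup (EulerHeisenberg e)}
    {V : Submodule ℤ (Fin 3 → ℤ)} (hV : ∀ g, log g ∈ V ↔ g ∈ K)
    (hmul : ∀ g ∈ K, ∀ h ∈ K, log (g * h) = log g + log h) :
    firstBettiNumber K = Module.finrank ℤ V := by
  let f : K →* Multiplicative V :=
    MonoidHom.mk' (fun g => .ofAdd ⟨log g.1, (hV g).2 g.2⟩) fun g h =>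
      congrArg Multiplicative.ofAdd (Subtype.ext (hmul g g.2 h h.2))
  have hf : Function.Injective f := fun g h hgh =>
    Subtype.ext (log_injective (congrArg (fun v : Multiplicative V => v.toAdd.1) hgh))
  refine firstBettiNumber_eq_finrank f (fun g hg => ⟨1, one_ne_zero, ?_⟩) fun v => ?_
  · rw [(injective_iff_map_eq_one f).1 hf g hg, one_zpow]
    exact one_mem _
  · obtain ⟨g, hg⟩ := exists_log_eq_two_smul e v.1
    have hgK : g ∈ K := (hV g).1 (hg ▸ V.smul_mem 2 v.2)
    exact ⟨2, two_ne_zero, ⟨g, hgK⟩, congrArg Multiplicative.ofAdd (Subtype.ext hg)⟩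

theorem firstBettiNumber_zero : firstBettiNumber (EulerHeisenberg 0) = 3 := by
  have hmul (g h : EulerHeisenberg 0) : log (g * h) = log g + log h := by
    rw [log_mul, Matrix.det_eq_zero_of_row_eq_zero 2 (congrFun (Pi.single_zero 2)),
      Pi.single_zero, add_zero]
  rw [← firstBettiNumber_congr Subgroup.topEquiv,
    firstBettiNumber_eq_finrank_of_log_mul (V := ⊤) (fun _ => Iff.rfl) fun g _ h _ => hmul g h,
    finrank_top, Module.finrank_fin_fun]

theorem firstBettiNumber_of_ne_zero (he : e ≠ 0) : firstBettiNumber (EulerHeisenberg e) = 2 := by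
  let f : EulerHeisenberg e →* Multiplicative (ℤ × ℤ) :=
    MonoidHom.mk' (fun g => .ofAdd (g.x, g.y)) fun _ _ => rfl
  rw [firstBettiNumber_eq_finrank f]
  · rw [Module.finrank_prod, Module.finrank_self]
  · intro g hg
    obtain ⟨hx, hy⟩ : g.x = 0 ∧ g.y = 0 := Prod.mk.inj hg
    have hgz : g = gen e 2 ^ g.z := by
      rw [gen_two_zpow]
      exact EulerHeisenberg.ext hx hy rfl
    refine ⟨e, he, ?_⟩
    rw [hgz, zpow_comm, ← commutatorElement_gen_zero_one]
    exact zpow_mem (Subgroup.commutator_mem_commutator (Subgroup.mem_top _) (Subgroup.mem_top _)) _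
  · rintro ⟨x, y⟩
    exact ⟨1, one_ne_zero, ⟨x, y, 0⟩, by rw [one_smul]; rfl⟩

theorem firstBettiNumber_eq_ite (e : ℤ) :
    firstBettiNumber (EulerHeisenberg e) = if e = 0 then 3 else 2 := by
  split_ifs with he
  · exact he ▸ firstBettiNumber_zero
  · exact firstBettiNumber_of_ne_zero he

end FirstBettiNumber

section Kernel

variable (φ : EulerHeisenberg e →* Multiplicative ℤ)

theorem toAdd_apply_eq (g : EulerHeisenberg e) :
    (φ g).toAdd =
      g.y * (φ (gen e 1)).toAdd + g.x * (φ (gen e 0)).toAdd + g.z * (φ (gen e 2)).toAdd := by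
  conv_lhs => rw [eq_zpow_mul_zpow_mul_zpow g]
  simp only [map_mul, map_zpow, toAdd_mul, toAdd_zpow, smul_eq_mul]

theorem mul_toAdd_apply_gen_two : e * (φ (gen e 2)).toAdd = 0 := by
  rw [← smul_eq_mul, ← toAdd_zpow, ← map_zpow, ← commutatorElement_gen_zero_one,
    map_commutatorElement, (Commute.all _ _).commutator_eq, toAdd_one]

/-- Twice the functional that `φ` induces in the logarithmic coordinates; the factor two matches
the doubled last coordinate of `log`. -/
def twiceDual : Module.Dual ℤ (Fin 3 → ℤ) :=
  Fintype.linearCombination ℤ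
    ![2 * (φ (gen e 0)).toAdd, 2 * (φ (gen e 1)).toAdd, (φ (gen e 2)).toAdd]

theorem twiceDual_log (g : EulerHeisenberg e) : twiceDual φ (log g) = 2 * (φ g).toAdd := by
  rw [toAdd_apply_eq φ g, twiceDual, Fintype.linearCombination_apply, Fin.sum_univ_three]
  change g.x * (2 * (φ (gen e 0)).toAdd) + g.y * (2 * (φ (gen e 1)).toAdd) +
    (2 * g.z - e * g.x * g.y) * (φ (gen e 2)).toAdd = 2 * _
  linear_combination -g.x * g.y * mul_toAdd_apply_gen_two φ

theorem twiceDual_single_two : twiceDual φ (Pi.single 2 e) = 0 := by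
  rw [twiceDual, Fintype.linearCombination_apply_single]
  exact mul_toAdd_apply_gen_two φ

theorem twiceDual_log_eq_zero_iff {g : EulerHeisenberg e} :
    twiceDual φ (log g) = 0 ↔ g ∈ φ.ker := by
  rw [twiceDual_log, mul_eq_zero_iff_left two_ne_zero, toAdd_eq_zero, MonoidHom.mem_ker]

theorem twiceDual_ne_zero {φ : EulerHeisenberg e →* Multiplicative ℤ} (hφ : φ ≠ 1) :
    twiceDual φ ≠ 0 := fun h =>
  hφ (MonoidHom.ext fun g => (twiceDual_log_eq_zero_iff φ).1 (by rw [h, LinearMap.zero_apply]))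

theorem firstBettiNumber_ker {φ : EulerHeisenberg e →* Multiplicative ℤ} (hφ : φ ≠ 1) :
    firstBettiNumber φ.ker = 2 := by
  have hl := twiceDual_ne_zero hφ
  rw [firstBettiNumber_eq_finrank_of_log_mul (V := (twiceDual φ).ker)
    (fun _ => twiceDual_log_eq_zero_iff φ) fun g hg h hh => log_mul_of_dual hl
      (twiceDual_single_two φ) ((twiceDual_log_eq_zero_iff φ).2 hg)
      ((twiceDual_log_eq_zero_iff φ).2 hh)]
  have hrank := finrank_ker_add_one_of_dual_ne_zero hl
  rw [Module.finrank_fin_fun] at hrank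
  omega

end Kernel

end EulerHeisenberg

theorem stmt_9_general (e : ℤ) :
    firstBettiNumber (PresentedGroup (EulerHeisenberg.relators e)) = (if e = 0 then 3 else 2) ∧
    ∀ φ : PresentedGroup (EulerHeisenberg.relators e) →* Multiplicative ℤ, φ ≠ 1 →
      firstBettiNumber φ.ker = 2 := by
  let ι := EulerHeisenberg.presentedGroupEquiv e
  refine ⟨(firstBettiNumber_congr ι).trans (EulerHeisenberg.firstBettiNumber_eq_ite e),
    fun φ hφ => ?_⟩
  rw [← firstBettiNumber_ker_comp_mulEquiv φ ι.symm]
  refine EulerHeisenberg.firstBettiNumber_ker fun h => hφ (MonoidHom.ext fun g => ?_)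
  simpa using DFunLike.congr_fun h (ι g)

/-- Example 7.1: for the fundamental group `G` of the oriented circle bundle of Euler
number `e` over the torus, `ℚ ⊗ Ab(G)` has dimension `2` if `e ≠ 0` and `3` if
`e = 0`, and for every surjective `φ : G → ℤ` the space `ℚ ⊗ Ab(ker φ)` has dimension
exactly `2` (i.e. `Δ^φ ≐ (t-1)²`). -/
theorem stmt_9 (e : ℤ) (a b c : FreeGroup (Fin 3))
    (ha : a = FreeGroup.of 0) (hb : b = FreeGroup.of 1) (hc : c = FreeGroup.of 2)
    (rels : Set (FreeGroup (Fin 3)))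
    (hrels : rels = {a * b * a⁻¹ * b⁻¹ * c ^ (-e), a * c * a⁻¹ * c⁻¹, b * c * b⁻¹ * c⁻¹}) :
    (Module.finrank ℚ (ℚ ⊗[ℤ] Additive (Abelianization (PresentedGroup rels)))
        = if e = 0 then 3 else 2) ∧
    ∀ φ : PresentedGroup rels →* Multiplicative ℤ, Function.Surjective φ →
      Module.finrank ℚ (ℚ ⊗[ℤ] Additive (Abelianization φ.ker)) = 2 := by
  subst ha hb hc hrels
  exact ⟨(stmt_9_general e).1, fun φ hφ => (stmt_9_general e).2 φ fun h =>
    bot_ne_top ((MonoidHom.range_eq_bot_iff.2 h).symm.trans (MonoidHom.range_eq_top.2 hφ))⟩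
end
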